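/- Let n ≥ 3 be an integer, s₀ ∈ ℝ, f₀ ∈ ℝ, and f₁ ∈ (−1, 1). There exists a twice continuously differentiable function f : ℝ → ℝ with f(s₀) = f₀ and f'(s₀) = f₁, such that f'(s) ∈ (−1, 1) for every s ∈ ℝ, and f''(s) = (f'(s)² − 1)·(1 + (n−1)·tanh(s)·f'(s)) for every s ∈ ℝ. -/

import Mathlib

/-!
The slope `p = f'` solves the first-order equation `p' = (p² - 1)(1 - p h)`, whose right-hand side
is not globally Lipschitz in `p`. It vanishes at `p = ±1`, so the strip `(-1, 1)` is invariant, and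
the substitution `p = tanh u` sends this strip to the whole line: the equation becomes
`u' = h tanh u - 1`, which on compact time intervals is bounded and uniformly Lipschitz in `u`.
Hence `u` exists for all time, and `f` is a primitive of `tanh u`.
-/

open Metric Set
open scoped NNReal

section IntegralCurve

variable {E : Type*} [NormedAddCommGroup E] [NormedSpace ℝ E] {v : ℝ → E → E} {t₀ : ℝ} {x₀ : E}

theorem exists_isIntegralCurveOn_Icc_of_lipschitzWith_of_norm_le [CompleteSpace E]
    {a b : ℝ} {K L : ℝ≥0} (ht₀ : t₀ ∈ Icc a b) (hlip : ∀ t ∈ Icc a b, LipschitzWith K (v t))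
    (hcont : ∀ x, ContinuousOn (v · x) (Icc a b)) (hbound : ∀ t ∈ Icc a b, ∀ x, ‖v t x‖ ≤ L) :
    ∃ γ : ℝ → E, γ t₀ = x₀ ∧ IsIntegralCurveOn γ v (Icc a b) := by
  -- The bound on `v` is global in space, so a ball of radius `L * (b - a)` traps the solution.
  have hle : 0 ≤ b - a := sub_nonneg.2 (ht₀.1.trans ht₀.2)
  have hpl : IsPicardLindelof v ⟨t₀, ht₀⟩ x₀ (L * (b - a).toNNReal) 0 L K :=
    { lipschitzOnWith := fun t ht => (hlip t ht).lipschitzOnWith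
      continuousOn := fun x _ => hcont x
      norm_le := fun t ht x _ => hbound t ht x
      mul_max_le := by
        have hmax : max (b - t₀) (t₀ - a) ≤ b - a :=
          max_le (sub_le_sub_left ht₀.1 b) (sub_le_sub_right ht₀.2 a)
        simpa [Real.coe_toNNReal _ hle] using mul_le_mul_of_nonneg_left hmax L.coe_nonneg }
  exact hpl.exists_eq_forall_mem_Icc_hasDerivWithinAt₀

theorem eqOn_ball_of_isIntegralCurveOn {γ γ' : ℝ → E} {K : ℝ≥0} {r : ℝ}
    (hlip : ∀ t ∈ ball t₀ r, LipschitzWith K (v t)) (hγ : IsIntegralCurveOn γ v (ball t₀ r))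
    (hγ' : IsIntegralCurveOn γ' v (ball t₀ r)) (h₀ : γ t₀ = γ' t₀) :
    EqOn γ γ' (ball t₀ r) := by
  intro t ht
  have ht₀ : t₀ ∈ ball t₀ r := mem_ball_self (pos_of_mem_ball ht)
  have hderiv {β : ℝ → E} (hβ : IsIntegralCurveOn β v (ball t₀ r)) :
      ∀ t ∈ ball t₀ r, HasDerivAt β (v t (β t)) t ∧ β t ∈ univ := fun t ht =>
    ⟨(hβ t ht).hasDerivAt (isOpen_ball.mem_nhds ht), mem_univ _⟩
  have hγd := hderiv hγ
  have hγd' := hderiv hγ'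
  rw [Real.ball_eq_Ioo] at *
  exact ODE_solution_unique_of_mem_Ioo (fun t ht => (hlip t ht).lipschitzOnWith) ht₀ hγd hγd' h₀ ht

theorem exists_isIntegralCurve_of_forall_ball
    (hlip : ∀ r, ∃ K : ℝ≥0, ∀ t ∈ ball t₀ r, LipschitzWith K (v t))
    (hloc : ∀ r, ∃ γ : ℝ → E, γ t₀ = x₀ ∧ IsIntegralCurveOn γ v (ball t₀ r)) :
    ∃ γ : ℝ → E, γ t₀ = x₀ ∧ IsIntegralCurve γ v := by
  choose γ hγ₀ hγ using hloc
  have hcompat {r R : ℝ} (hrR : r ≤ R) : EqOn (γ r) (γ R) (ball t₀ r) := by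
    obtain ⟨K, hK⟩ := hlip r
    exact eqOn_ball_of_isIntegralCurveOn hK (hγ r) ((hγ R).mono (ball_subset_ball hrR))
      ((hγ₀ r).trans (hγ₀ R).symm)
  have hself (t : ℝ) : t ∈ ball t₀ (dist t t₀ + 1) := mem_ball.2 (lt_add_one _)
  let β : ℝ → E := fun t => γ (dist t t₀ + 1) t
  have hβ (r : ℝ) : EqOn β (γ r) (ball t₀ r) := fun t ht =>
    (le_total (dist t t₀ + 1) r).elim (fun h => hcompat h (hself t)) (fun h => (hcompat h ht).symm)
  refine ⟨β, hγ₀ _, fun t => ?_⟩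
  have hnhds := isOpen_ball.mem_nhds (hself t)
  exact ((hγ _ t (hself t)).hasDerivAt hnhds).congr_of_eventuallyEq
    ((hβ _).eventuallyEq_of_mem hnhds)

theorem exists_isIntegralCurve_of_lipschitzWith_of_norm_le [CompleteSpace E]
    (hlip : ∀ s : Set ℝ, IsCompact s → ∃ K : ℝ≥0, ∀ t ∈ s, LipschitzWith K (v t))
    (hcont : ∀ x, Continuous (v · x))
    (hbound : ∀ s : Set ℝ, IsCompact s → ∃ L : ℝ≥0, ∀ t ∈ s, ∀ x, ‖v t x‖ ≤ L) :
    ∃ γ : ℝ → E, γ t₀ = x₀ ∧ IsIntegralCurve γ v := by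
  refine exists_isIntegralCurve_of_forall_ball (fun r => ?_) (fun r => ?_)
  · obtain ⟨K, hK⟩ := hlip _ (isCompact_closedBall t₀ r)
    exact ⟨K, fun t ht => hK t (ball_subset_closedBall ht)⟩
  · rcases le_or_gt r 0 with hr | hr
    · exact ⟨fun _ => x₀, rfl, by simp [ball_eq_empty.2 hr, IsIntegralCurveOn]⟩
    have ht₀ : t₀ ∈ closedBall t₀ r := mem_closedBall_self hr.le
    obtain ⟨K, hK⟩ := hlip _ (isCompact_closedBall t₀ r)
    obtain ⟨L, hL⟩ := hbound _ (isCompact_closedBall t₀ r)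
    have hsub : ball t₀ r ⊆ closedBall t₀ r := ball_subset_closedBall
    rw [Real.closedBall_eq_Icc] at ht₀ hK hL hsub
    obtain ⟨γ, hγ₀, hγ⟩ := exists_isIntegralCurveOn_Icc_of_lipschitzWith_of_norm_le ht₀ hK
      (fun x => (hcont x).continuousOn) hL
    exact ⟨γ, hγ₀, hγ.mono hsub⟩

theorem contDiff_one_of_isIntegralCurve {γ : ℝ → E} (hγ : IsIntegralCurve γ v)
    (hv : Continuous (Function.uncurry v)) : ContDiff ℝ 1 γ := by
  refine contDiff_one_iff_deriv.2 ⟨fun t => (hγ t).differentiableAt, ?_⟩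
  rw [funext fun t => (hγ t).deriv]
  exact hv.comp (continuous_id.prodMk hγ.continuous)

end IntegralCurve

theorem exists_contDiff_succ_deriv_eq {E : Type*} [NormedAddCommGroup E] [NormedSpace ℝ E]
    [CompleteSpace E] {n : ℕ∞} {g : ℝ → E} (hg : ContDiff ℝ n g) (t₀ : ℝ) (y₀ : E) :
    ∃ f : ℝ → E, ContDiff ℝ (n + 1) f ∧ f t₀ = y₀ ∧ deriv f = g := by
  let f : ℝ → E := fun t => y₀ + ∫ τ in t₀..t, g τ
  have hf (t : ℝ) : HasDerivAt f (g t) t :=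
    (hg.continuous.integral_hasStrictDerivAt t₀ t).hasDerivAt.const_add y₀
  have hderiv : deriv f = g := funext fun t => (hf t).deriv
  refine ⟨f, contDiff_succ_iff_deriv.2 ⟨fun t => (hf t).differentiableAt, by simp, ?_⟩, by simp [f],
    hderiv⟩
  rwa [hderiv]

theorem hasDerivAt_tanh (x : ℝ) : HasDerivAt Real.tanh (1 - Real.tanh x ^ 2) x := by
  have hquot : Real.tanh = Real.sinh / Real.cosh := funext Real.tanh_eq_sinh_div_cosh
  have hcosh : Real.cosh x ≠ 0 := (Real.cosh_pos x).ne'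
  rw [hquot]
  refine ((Real.hasDerivAt_sinh x).div (Real.hasDerivAt_cosh x) hcosh).congr_deriv ?_
  simp only [Pi.div_apply]
  field_simp

theorem lipschitzWith_one_tanh : LipschitzWith 1 Real.tanh := by
  refine lipschitzWith_of_nnnorm_deriv_le
    (fun x => (hasDerivAt_tanh x).differentiableAt) fun x => ?_
  rw [(hasDerivAt_tanh x).deriv, ← NNReal.coe_le_coe, coe_nnnorm, NNReal.coe_one, Real.norm_eq_abs,
    abs_of_pos (sub_pos.2 (Real.tanh_sq_lt_one x))]
  exact sub_le_self 1 (sq_nonneg _)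

section Soliton

variable {h : ℝ → ℝ}

/-- The soliton equation `f'' = (f'² - 1)(1 - f' h)` in terms of the rapidity `u = artanh f'`, as a
time-dependent vector field on the line. Here `h s` is the mean curvature of the orbit at `s`; in
`dS^n` it is `-(n - 1) tanh s`. -/
noncomputable def rapidityField (h : ℝ → ℝ) (s u : ℝ) : ℝ := h s * Real.tanh u - 1

theorem lipschitzWith_rapidityField (h : ℝ → ℝ) (s : ℝ) :
    LipschitzWith ‖h s‖₊ (rapidityField h s) :=
  LipschitzWith.of_dist_le_mul fun x y => by
    simpa [rapidityField, Real.dist_eq, ← mul_sub, abs_mul] using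
      mul_le_mul_of_nonneg_left (lipschitzWith_one_tanh.dist_le_mul x y) (abs_nonneg (h s))

theorem norm_rapidityField_le (h : ℝ → ℝ) (s u : ℝ) : ‖rapidityField h s u‖ ≤ ‖h s‖ + 1 :=
  calc ‖h s * Real.tanh u - 1‖ ≤ ‖h s‖ * ‖Real.tanh u‖ + ‖(1 : ℝ)‖ :=
        (norm_sub_le _ _).trans_eq (by rw [norm_mul])
    _ ≤ ‖h s‖ + 1 := by
        rw [norm_one]
        gcongr
        exact mul_le_of_le_one_right (norm_nonneg _) (Real.abs_tanh_lt_one u).le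

theorem exists_isIntegralCurve_rapidityField (hh : Continuous h) (s₀ u₀ : ℝ) :
    ∃ u : ℝ → ℝ, u s₀ = u₀ ∧ IsIntegralCurve u (rapidityField h) := by
  have hbdd (s : Set ℝ) (hs : IsCompact s) : ∃ M : ℝ≥0, ∀ t ∈ s, ‖h t‖₊ ≤ M :=
    let ⟨M, hM⟩ := hs.bddAbove_image hh.nnnorm.continuousOn
    ⟨M, fun _ ht => hM (mem_image_of_mem _ ht)⟩
  refine exists_isIntegralCurve_of_lipschitzWith_of_norm_le (fun s hs => ?_)
    (fun x => (hh.mul_const _).sub continuous_const) (fun s hs => ?_)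
  · obtain ⟨M, hM⟩ := hbdd s hs
    exact ⟨M, fun t ht => (lipschitzWith_rapidityField h t).weaken (hM t ht)⟩
  · obtain ⟨M, hM⟩ := hbdd s hs
    exact ⟨M + 1, fun t ht x =>
      (norm_rapidityField_le h t x).trans (by push_cast; gcongr; exact hM t ht)⟩

theorem isIntegralCurve_tanh_comp {u : ℝ → ℝ} (hu : IsIntegralCurve u (rapidityField h)) :
    IsIntegralCurve (fun s => Real.tanh (u s)) fun s p => (p ^ 2 - 1) * (1 - p * h s) := fun s =>
  ((hasDerivAt_tanh (u s)).comp s (hu s)).congr_deriv (by simp only [rapidityField]; ring)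

end Soliton

theorem stmt_6_general {h : ℝ → ℝ} (hh : Continuous h) (s₀ f₀ : ℝ) {f₁ : ℝ}
    (hf₁ : f₁ ∈ Ioo (-1 : ℝ) 1) :
    ∃ f : ℝ → ℝ, ContDiff ℝ 2 f ∧
      f s₀ = f₀ ∧ deriv f s₀ = f₁ ∧
      (∀ s : ℝ, deriv f s ∈ Ioo (-1 : ℝ) 1) ∧
      ∀ s : ℝ, deriv (deriv f) s = ((deriv f s) ^ 2 - 1) * (1 - deriv f s * h s) := by
  obtain ⟨u, hu₀, hu⟩ := exists_isIntegralCurve_rapidityField hh s₀ (Real.artanh f₁)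
  have hp := isIntegralCurve_tanh_comp hu
  have hp_contDiff := contDiff_one_of_isIntegralCurve hp (by unfold Function.uncurry; fun_prop)
  obtain ⟨f, hf, hf₀, hf'⟩ := exists_contDiff_succ_deriv_eq (n := 1) hp_contDiff s₀ f₀
  refine ⟨f, by simpa [one_add_one_eq_two] using hf, hf₀, ?_, fun s => ?_, fun s => ?_⟩ <;> rw [hf']
  · simp only [hu₀, Real.tanh_artanh hf₁]
  · exact ⟨Real.neg_one_lt_tanh _, Real.tanh_lt_one _⟩
  · exact (hp s).deriv

/-- Entire spacelike rotationally symmetric translating solitons in dS^n × ℝ. -/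
theorem stmt_6 (n : ℕ) (hn : 3 ≤ n) (s₀ f₀ : ℝ) (f₁ : ℝ) (hf₁ : f₁ ∈ Set.Ioo (-1 : ℝ) 1) :
    ∃ f : ℝ → ℝ, ContDiff ℝ 2 f ∧
      f s₀ = f₀ ∧ deriv f s₀ = f₁ ∧
      (∀ s : ℝ, deriv f s ∈ Set.Ioo (-1 : ℝ) 1) ∧
      ∀ s : ℝ, deriv (deriv f) s =
        ((deriv f s) ^ 2 - 1) * (1 + ((n : ℝ) - 1) * Real.tanh s * deriv f s) := by
  simpa [mul_comm] using stmt_6_general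
    (h := fun s => -(((n : ℝ) - 1) * Real.tanh s))
    (lipschitzWith_one_tanh.continuous.const_mul _).neg s₀ f₀ hf₁
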